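/- arXiv:1202.0932 — 5 statements merged into one kernel-verified Lean document; each statement's English description precedes it below -/
import Mathlib

section
/- For every n ≥ 1 and all permutations π, σ ∈ S_n, the translocation distance satisfies d∘(π,σ) = n − l(π,σ), where l(π,σ) is the length of the longest common subsequence of π and σ. -/
/-!
A translocation moves one letter, and deleting that letter from a common subsequence leaves a
common subsequence, so one translocation raises the length of the longest common subsequence with a
fixed target by at most one. Conversely, while a longest common subsequence `w` is shorter than the
target, it extends to a subsequence of the target by inserting some letter `a`. The current list is
a rearrangement of the target, so it has an occurrence of `a` outside an embedded copy of `w`, and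
moving that occurrence to its place relative to `w` raises the length by exactly one.
-/

/-- `IsMove l l'` holds if `l'` is obtained from `l` by a single translocation:
removing the element at position `i` and reinserting it at position `j`. -/
def IsMove {α : Type*} (l l' : List α) : Prop :=
  ∃ i j : Fin l.length, l' = (l.eraseIdx i).insertIdx j (l.get i)

/-- `ReachIn step m l l'` holds if `l'` can be obtained from `l` by `m` applications
of the relation `step`. -/
def ReachIn {α : Type*} (step : List α → List α → Prop) : ℕ → List α → List α → Prop
  | 0, l, l' => l = l'
  | m+1, l, l' => ∃ l'', step l l'' ∧ ReachIn step m l'' l'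

/-- The one-line notation of a permutation of `Fin n`. -/
def oneLine {n : ℕ} (σ : Equiv.Perm (Fin n)) : List (Fin n) := List.ofFn σ

/-- The translocation distance: the minimum number of translocations transforming
the one-line notation of `σ` into that of `π`. -/
noncomputable def translocDist {n : ℕ} (σ π : Equiv.Perm (Fin n)) : ℕ :=
  sInf {m | ReachIn IsMove m (oneLine σ) (oneLine π)}

/-- The length of the longest common subsequence of two lists. -/
noncomputable def lcsLen {α : Type*} (l₁ l₂ : List α) : ℕ :=
  sSup {m | ∃ w : List α, w.length = m ∧ w.Sublist l₁ ∧ w.Sublist l₂}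

section Sublist

variable {α : Type*} {w l C D : List α} {a : α}

theorem exists_sublist_append_of_sublist_append_cons (h : w.Sublist (C ++ a :: D)) :
    ∃ w' : List α, w'.Sublist w ∧ w'.Sublist (C ++ D) ∧ w.length ≤ w'.length + 1 := by
  obtain ⟨u, v, rfl, hu, hv⟩ := List.sublist_append_iff.1 h
  rcases List.sublist_cons_iff.1 hv with hv | ⟨r, rfl, hr⟩
  · exact ⟨u ++ v, .refl _, hu.append hv, Nat.le_succ _⟩
  · exact ⟨u ++ r, (List.Sublist.refl u).append (List.sublist_cons_self a r), hu.append hr,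
      by simp [Nat.add_assoc]⟩

theorem exists_append_cons_sublist_of_length_lt (h : w.Sublist l) (hlt : w.length < l.length) :
    ∃ (u v : List α) (a : α), w = u ++ v ∧ (u ++ a :: v).Sublist l := by
  induction h with
  | slnil => exact absurd hlt (lt_irrefl _)
  | @cons w l b h _ => exact ⟨[], w, b, rfl, h.cons_cons b⟩
  | @cons_cons w l b _ ih =>
    obtain ⟨u, v, a, rfl, huv⟩ := ih (Nat.lt_of_succ_lt_succ hlt)
    exact ⟨b :: u, v, a, rfl, huv.cons_cons b⟩

theorem exists_eq_append_cons_of_count_lt [DecidableEq α] (h : w.Sublist l)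
    (hlt : w.count a < l.count a) :
    ∃ A B : List α, l = A ++ a :: B ∧ w.Sublist (A ++ B) := by
  induction h with
  | slnil => exact absurd hlt (lt_irrefl _)
  | @cons w l b h ih =>
    by_cases hb : b = a
    · exact ⟨[], l, by rw [hb, List.nil_append], h⟩
    · rw [List.count_cons_of_ne hb] at hlt
      obtain ⟨A, B, rfl, hAB⟩ := ih hlt
      exact ⟨b :: A, B, rfl, hAB.cons b⟩
  | @cons_cons w l b _ ih =>
    simp only [List.count_cons, Nat.add_lt_add_iff_right] at hlt
    obtain ⟨A, B, rfl, hAB⟩ := ih hlt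
    exact ⟨b :: A, B, rfl, hAB.cons_cons b⟩

end Sublist

section LcsLen

variable {α : Type*} {w l l₁ l₂ : List α}

theorem isGreatest_lcsLen (l₁ l₂ : List α) :
    IsGreatest {m | ∃ w : List α, w.length = m ∧ w.Sublist l₁ ∧ w.Sublist l₂} (lcsLen l₁ l₂) := by
  have hbdd : BddAbove {m | ∃ w : List α, w.length = m ∧ w.Sublist l₁ ∧ w.Sublist l₂} := by
    refine ⟨l₁.length, ?_⟩
    rintro m ⟨w, rfl, hw, _⟩
    exact hw.length_le
  exact ⟨Nat.sSup_mem ⟨0, [], rfl, l₁.nil_sublist, l₂.nil_sublist⟩ hbdd, fun _ => le_csSup hbdd⟩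

theorem exists_common_sublist_length_eq_lcsLen (l₁ l₂ : List α) :
    ∃ w : List α, w.length = lcsLen l₁ l₂ ∧ w.Sublist l₁ ∧ w.Sublist l₂ :=
  (isGreatest_lcsLen l₁ l₂).1

theorem length_le_lcsLen (h₁ : w.Sublist l₁) (h₂ : w.Sublist l₂) : w.length ≤ lcsLen l₁ l₂ :=
  (isGreatest_lcsLen l₁ l₂).2 ⟨w, rfl, h₁, h₂⟩

theorem lcsLen_le_length_left (l₁ l₂ : List α) : lcsLen l₁ l₂ ≤ l₁.length := by
  obtain ⟨w, hw, h₁, -⟩ := exists_common_sublist_length_eq_lcsLen l₁ l₂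
  exact hw ▸ h₁.length_le

theorem lcsLen_mono_left (h : l₁.Sublist l₂) (l : List α) : lcsLen l₁ l ≤ lcsLen l₂ l := by
  obtain ⟨w, hw, h₁, h₂⟩ := exists_common_sublist_length_eq_lcsLen l₁ l
  exact hw ▸ length_le_lcsLen (h₁.trans h) h₂

theorem lcsLen_append_cons_le (C D : List α) (a : α) (l : List α) :
    lcsLen (C ++ a :: D) l ≤ lcsLen (C ++ D) l + 1 := by
  obtain ⟨w, hw, h₁, h₂⟩ := exists_common_sublist_length_eq_lcsLen (C ++ a :: D) l
  obtain ⟨w', hw'w, hw', hlen⟩ := exists_sublist_append_of_sublist_append_cons h₁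
  calc lcsLen (C ++ a :: D) l = w.length := hw.symm
    _ ≤ w'.length + 1 := hlen
    _ ≤ lcsLen (C ++ D) l + 1 := Nat.succ_le_succ (length_le_lcsLen hw' (hw'w.trans h₂))

theorem eq_of_lcsLen_eq_length (h₁ : lcsLen l₁ l₂ = l₁.length) (h₂ : lcsLen l₁ l₂ = l₂.length) :
    l₁ = l₂ := by
  obtain ⟨w, hw, hw₁, hw₂⟩ := exists_common_sublist_length_eq_lcsLen l₁ l₂
  exact (hw₁.eq_of_length (hw.trans h₁)).symm.trans (hw₂.eq_of_length (hw.trans h₂))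

end LcsLen

section Translocation

variable {α : Type*} {m : ℕ} {l l' l'' : List α}

theorem insertIdx_length_append (C D : List α) (a : α) :
    (C ++ D).insertIdx C.length a = C ++ a :: D := by
  induction C with
  | nil => rfl
  | cons c C ih => simp [ih]

theorem isMove_iff_exists_append : IsMove l l' ↔
    ∃ (A B C D : List α) (a : α), l = A ++ a :: B ∧ l' = C ++ a :: D ∧ A ++ B = C ++ D := by
  constructor
  · rintro ⟨i, j, rfl⟩
    have hj : (j : ℕ) ≤ (l.eraseIdx i).length := by
      rw [List.length_eraseIdx_of_lt i.2]
      exact Nat.le_sub_one_of_lt j.2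
    refine ⟨l.take i, l.drop (i + 1), (l.eraseIdx i).take j, (l.eraseIdx i).drop j, l.get i,
      by simp, ?_, by rw [List.take_append_drop, List.eraseIdx_eq_take_drop_succ]⟩
    rw [← insertIdx_length_append, List.take_append_drop, List.length_take, min_eq_left hj]
  · rintro ⟨A, B, C, D, a, rfl, rfl, h⟩
    have hlen : A.length + B.length = C.length + D.length := by
      simpa only [List.length_append] using congrArg List.length h
    have herase : (A ++ a :: B).eraseIdx A.length = C ++ D := by
      simp [List.eraseIdx_append_of_length_le, h]
    refine ⟨⟨A.length, by simp⟩, ⟨C.length, by simp; omega⟩, ?_⟩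
    simp only [herase, insertIdx_length_append, List.get_eq_getElem, List.getElem_append_right,
      le_refl, Nat.sub_self, List.getElem_cons_zero]

theorem IsMove.perm (h : IsMove l l') : l.Perm l' := by
  obtain ⟨A, B, C, D, a, rfl, rfl, hABCD⟩ := isMove_iff_exists_append.1 h
  exact List.perm_middle.trans (hABCD ▸ List.perm_middle.symm)

theorem IsMove.lcsLen_le (h : IsMove l l'') (l' : List α) :
    lcsLen l'' l' ≤ lcsLen l l' + 1 := by
  obtain ⟨A, B, C, D, a, rfl, rfl, hABCD⟩ := isMove_iff_exists_append.1 h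
  calc lcsLen (C ++ a :: D) l' ≤ lcsLen (C ++ D) l' + 1 := lcsLen_append_cons_le C D a l'
    _ = lcsLen (A ++ B) l' + 1 := by rw [hABCD]
    _ ≤ lcsLen (A ++ a :: B) l' + 1 :=
      Nat.succ_le_succ (lcsLen_mono_left ((List.sublist_cons_self a B).append_left A) l')

theorem ReachIn.length_le_lcsLen_add (h : ReachIn IsMove m l l') :
    l'.length ≤ lcsLen l l' + m := by
  induction m generalizing l with
  | zero =>
    obtain rfl : l = l' := h
    exact length_le_lcsLen (.refl l) (.refl l)
  | succ m ih =>
    obtain ⟨l'', hmove, hreach⟩ := h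
    calc l'.length ≤ lcsLen l'' l' + m := ih hreach
      _ ≤ lcsLen l l' + 1 + m := Nat.add_le_add_right (hmove.lcsLen_le l') m
      _ = lcsLen l l' + (m + 1) := by omega

theorem exists_isMove_lcsLen_eq_add_one (hp : l.Perm l') (hlt : lcsLen l l' < l'.length) :
    ∃ l'' : List α, IsMove l l'' ∧ lcsLen l'' l' = lcsLen l l' + 1 := by
  classical
  obtain ⟨w, hw, hwl, hwl'⟩ := exists_common_sublist_length_eq_lcsLen l l'
  obtain ⟨u, v, a, rfl, hext⟩ := exists_append_cons_sublist_of_length_lt hwl' (hw ▸ hlt)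
  have hcount : (u ++ v).count a < l.count a := by
    calc (u ++ v).count a < (u ++ a :: v).count a := by simp
      _ ≤ l'.count a := hext.count_le a
      _ = l.count a := (hp.count_eq a).symm
  obtain ⟨A, B, rfl, hAB⟩ := exists_eq_append_cons_of_count_lt hwl hcount
  obtain ⟨C, D, hCD, hu, hv⟩ := List.append_sublist_iff.1 hAB
  have hmove : IsMove (A ++ a :: B) (C ++ a :: D) :=
    isMove_iff_exists_append.2 ⟨A, B, C, D, a, rfl, rfl, hCD⟩
  refine ⟨C ++ a :: D, hmove, le_antisymm (hmove.lcsLen_le l') ?_⟩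
  calc lcsLen (A ++ a :: B) l' + 1 = (u ++ a :: v).length := by simp [← hw, Nat.add_assoc]
    _ ≤ lcsLen (C ++ a :: D) l' := length_le_lcsLen (hu.append (hv.cons_cons a)) hext

theorem reachIn_of_length_eq_lcsLen_add (hp : l.Perm l') (h : l'.length = lcsLen l l' + m) :
    ReachIn IsMove m l l' := by
  induction m generalizing l with
  | zero => exact eq_of_lcsLen_eq_length (h.symm.trans hp.length_eq.symm) h.symm
  | succ m ih =>
    obtain ⟨l'', hmove, hlcs⟩ := exists_isMove_lcsLen_eq_add_one hp (by omega)
    exact ⟨l'', hmove, ih (hmove.perm.symm.trans hp) (by omega)⟩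

end Translocation

theorem translocDist_eq_sub_lcsLen_general {α : Type*} {l l' : List α} (hp : l.Perm l') :
    IsLeast {m | ReachIn IsMove m l l'} (l.length - lcsLen l l') := by
  have hle : lcsLen l l' ≤ l.length := lcsLen_le_length_left l l'
  have hlen : l.length = l'.length := hp.length_eq
  refine ⟨reachIn_of_length_eq_lcsLen_add hp (by omega), fun m hm => ?_⟩
  have hlower : l'.length ≤ lcsLen l l' + m := ReachIn.length_le_lcsLen_add hm
  omega

theorem length_oneLine {n : ℕ} (σ : Equiv.Perm (Fin n)) : (oneLine σ).length = n :=
  List.length_ofFn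

theorem oneLine_perm_oneLine {n : ℕ} (π σ : Equiv.Perm (Fin n)) :
    (oneLine π).Perm (oneLine σ) :=
  (π.ofFn_comp_perm id).trans (σ.ofFn_comp_perm id).symm

/-- For every `n ≥ 1` and all permutations `π, σ ∈ S_n`, the translocation distance
equals `n` minus the length of the longest common subsequence of `π` and `σ`. -/
theorem translocDist_eq_sub_lcsLen (n : ℕ) (hn : 1 ≤ n) (π σ : Equiv.Perm (Fin n)) :
    translocDist π σ = n - lcsLen (oneLine π) (oneLine σ) := by
  simpa only [length_oneLine, translocDist] using
    (translocDist_eq_sub_lcsLen_general (oneLine_perm_oneLine π σ)).csInf_eq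
end

section
/- For every n ≥ 2 and all permutations σ, π ∈ S_n, the translocation distance satisfies dT(σ,π)/(n−1) ≤ d∘(σ,π) ≤ 2·dT(σ,π), where dT denotes the transposition (Cayley) distance. -/
/-- The transposition (Cayley) distance: the minimum number of transpositions
transforming `σ` into `π`. -/
noncomputable def cayleyDist {n : ℕ} (σ π : Equiv.Perm (Fin n)) : ℕ :=
  sInf {m | ∃ L : List (Equiv.Perm (Fin n)), L.length = m ∧
    (∀ τ ∈ L, ∃ a b : Fin n, a ≠ b ∧ τ = Equiv.swap a b) ∧ π = σ * L.prod}

/-! Left multiplication of `f` by the transposition of `x` and `f x ≠ x` fixes `x` and moves no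
point fixed by `f`, so the Cayley distance on `S_n` is at most `n - 1`; distinct permutations are
at translocation distance at least `1`, which gives the lower bound. For the upper bound, two
entries `x`, `y` of a word `A x B y C` are exchanged by two translocations, passing through
`A B y x C`. -/

section Moves

variable {α : Type*}

theorem ReachIn.trans {step : List α → List α → Prop} {p q : ℕ} {l l' l'' : List α}
    (h : ReachIn step p l l') (h' : ReachIn step q l' l'') : ReachIn step (p + q) l l'' := by
  induction p generalizing l with
  | zero =>
    obtain rfl : l = l' := h
    rwa [Nat.zero_add]
  | succ p ih =>
    obtain ⟨k, hlk, hk⟩ := h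
    rw [Nat.succ_add]
    exact ⟨k, hlk, ih hk⟩

theorem insertIdx_length_append_s5 (A B : List α) (x : α) :
    (A ++ B).insertIdx A.length x = A ++ x :: B := by
  induction A with
  | nil => rfl
  | cons a A ih => exact congrArg (List.cons a) ih

theorem isMove_of_append_eq_append {A B C D : List α} (x : α) (h : A ++ B = C ++ D) :
    IsMove (A ++ x :: B) (C ++ x :: D) := by
  have hlen : A.length + B.length = C.length + D.length := by
    simpa only [List.length_append] using congrArg List.length h
  refine ⟨⟨A.length, by grind⟩, ⟨C.length, by grind⟩, ?_⟩
  have erase : (A ++ x :: B).eraseIdx A.length = C ++ D := by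
    simp [List.eraseIdx_append_of_length_le, h]
  simp [erase, insertIdx_length_append_s5]

theorem reachIn_two_exchange (A B C : List α) (x y : α) :
    ReachIn IsMove 2 (A ++ x :: (B ++ y :: C)) (A ++ y :: (B ++ x :: C)) := by
  have move_x : IsMove (A ++ x :: (B ++ y :: C)) ((A ++ B ++ [y]) ++ x :: C) :=
    isMove_of_append_eq_append x (by simp)
  have move_y : IsMove ((A ++ B) ++ y :: (x :: C)) (A ++ y :: (B ++ x :: C)) :=
    isMove_of_append_eq_append y (by simp)
  exact ⟨_, move_x, _, by simpa using move_y, rfl⟩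

variable [DecidableEq α]

theorem map_swap_eq_self {l : List α} {x y : α} (hx : x ∉ l) (hy : y ∉ l) :
    l.map (Equiv.swap x y) = l := by
  refine (List.map_congr_left fun z hz => ?_).trans (List.map_id l)
  exact Equiv.swap_apply_of_ne_of_ne (ne_of_mem_of_not_mem hz hx) (ne_of_mem_of_not_mem hz hy)

theorem map_swap_append_cons_append_cons {A B C : List α} {x y : α}
    (h : (A ++ x :: (B ++ y :: C)).Nodup) :
    (A ++ x :: (B ++ y :: C)).map (Equiv.swap x y) = A ++ y :: (B ++ x :: C) := by
  have hA : A.map (Equiv.swap x y) = A := map_swap_eq_self (by grind) (by grind)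
  have hB : B.map (Equiv.swap x y) = B := map_swap_eq_self (by grind) (by grind)
  have hC : C.map (Equiv.swap x y) = C := map_swap_eq_self (by grind) (by grind)
  simp only [List.map_append, List.map_cons, Equiv.swap_apply_left, Equiv.swap_apply_right,
    hA, hB, hC]

theorem reachIn_two_map_swap {l : List α} (hl : l.Nodup) {x y : α} (hx : x ∈ l) (hy : y ∈ l)
    (hxy : x ≠ y) : ReachIn IsMove 2 l (l.map (Equiv.swap x y)) := by
  obtain ⟨A, D, rfl⟩ := List.append_of_mem hx
  have hy' : y ∈ A ∨ y ∈ D := by grind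
  rcases hy' with hyA | hyD
  · obtain ⟨A, B, rfl⟩ := List.append_of_mem hyA
    rw [List.append_assoc, List.cons_append] at hl ⊢
    rw [Equiv.swap_comm, map_swap_append_cons_append_cons hl]
    exact reachIn_two_exchange A B D y x
  · obtain ⟨B, C, rfl⟩ := List.append_of_mem hyD
    rw [map_swap_append_cons_append_cons hl]
    exact reachIn_two_exchange A B C x y

end Moves

theorem exists_swaps_length_le_card_support_sub_one {α : Type*} [DecidableEq α] [Fintype α]
    (f : Equiv.Perm α) :
    ∃ L : List (Equiv.Perm α),
      L.length ≤ f.support.card - 1 ∧ (∀ τ ∈ L, τ.IsSwap) ∧ L.prod = f := by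
  by_cases hf : f = 1
  · exact ⟨[], by simp [hf]⟩
  obtain ⟨x, hx⟩ : ∃ x, f x ≠ x := by
    simpa [Equiv.ext_iff] using hf
  have two_le := Equiv.Perm.two_le_card_support_of_ne_one hf
  have card_lt := Equiv.Perm.card_support_swap_mul hx
  obtain ⟨L, hlen, hswap, hprod⟩ :=
    exists_swaps_length_le_card_support_sub_one (Equiv.swap x (f x) * f)
  refine ⟨Equiv.swap x (f x) :: L, ?_, ?_, ?_⟩
  · rw [List.length_cons]
    omega
  · exact List.forall_mem_cons.mpr ⟨⟨x, f x, hx.symm, rfl⟩, hswap⟩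
  · rw [List.prod_cons, hprod, Equiv.swap_mul_self_mul]
termination_by f.support.card

section Distances

variable {n : ℕ}

theorem oneLine_injective : Function.Injective (oneLine (n := n)) :=
  List.ofFn_injective.comp DFunLike.coe_injective

theorem nodup_oneLine (σ : Equiv.Perm (Fin n)) : (oneLine σ).Nodup :=
  List.nodup_ofFn_ofInjective σ.injective

theorem apply_mem_oneLine (σ : Equiv.Perm (Fin n)) (a : Fin n) : σ a ∈ oneLine σ :=
  List.mem_ofFn.mpr ⟨a, rfl⟩

theorem oneLine_mul (τ σ : Equiv.Perm (Fin n)) : oneLine (τ * σ) = (oneLine σ).map τ := by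
  rw [oneLine, oneLine, List.map_ofFn, Equiv.Perm.coe_mul]

theorem reachIn_two_oneLine_mul_swap (σ : Equiv.Perm (Fin n)) {τ : Equiv.Perm (Fin n)}
    (hτ : τ.IsSwap) :
    ReachIn IsMove 2 (oneLine σ) (oneLine (σ * τ)) := by
  obtain ⟨a, b, hab, rfl⟩ := hτ
  rw [Equiv.mul_swap_eq_swap_mul, oneLine_mul]
  exact reachIn_two_map_swap (nodup_oneLine σ) (apply_mem_oneLine σ a) (apply_mem_oneLine σ b)
    (σ.injective.ne hab)

theorem reachIn_oneLine_mul_prod_swaps (σ : Equiv.Perm (Fin n)) {L : List (Equiv.Perm (Fin n))}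
    (hL : ∀ τ ∈ L, τ.IsSwap) :
    ReachIn IsMove (2 * L.length) (oneLine σ) (oneLine (σ * L.prod)) := by
  induction L generalizing σ with
  | nil => exact congrArg oneLine (mul_one σ).symm
  | cons τ L ih =>
    obtain ⟨hτ, hL⟩ := List.forall_mem_cons.mp hL
    rw [List.prod_cons, ← mul_assoc, List.length_cons, Nat.mul_succ, Nat.add_comm]
    exact (reachIn_two_oneLine_mul_swap σ hτ).trans (ih (σ * τ) hL)

theorem cayleyDist_mul_prod_swaps_le (σ : Equiv.Perm (Fin n)) {L : List (Equiv.Perm (Fin n))}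
    (hL : ∀ τ ∈ L, τ.IsSwap) : cayleyDist σ (σ * L.prod) ≤ L.length :=
  Nat.sInf_le ⟨L, rfl, hL, rfl⟩

theorem cayleyDist_self (σ : Equiv.Perm (Fin n)) : cayleyDist σ σ = 0 := by
  simpa using cayleyDist_mul_prod_swaps_le σ (L := []) (by simp)

theorem cayleyDist_le_sub_one (σ π : Equiv.Perm (Fin n)) : cayleyDist σ π ≤ n - 1 := by
  obtain ⟨L, hlen, hswap, hprod⟩ := exists_swaps_length_le_card_support_sub_one (σ⁻¹ * π)
  calc cayleyDist σ π
    _ = cayleyDist σ (σ * L.prod) := by rw [hprod, mul_inv_cancel_left]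
    _ ≤ L.length := cayleyDist_mul_prod_swaps_le σ hswap
    _ ≤ (σ⁻¹ * π).support.card - 1 := hlen
    _ ≤ n - 1 := Nat.sub_le_sub_right (card_finset_fin_le _) 1

theorem exists_swaps_length_eq_cayleyDist (σ π : Equiv.Perm (Fin n)) :
    ∃ L : List (Equiv.Perm (Fin n)),
      L.length = cayleyDist σ π ∧ (∀ τ ∈ L, τ.IsSwap) ∧ π = σ * L.prod := by
  obtain ⟨L, -, hswap, hprod⟩ := exists_swaps_length_le_card_support_sub_one (σ⁻¹ * π)
  have hπ : π = σ * L.prod := by rw [hprod, mul_inv_cancel_left]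
  exact Nat.sInf_mem (s := {m | ∃ L : List (Equiv.Perm (Fin n)),
    L.length = m ∧ (∀ τ ∈ L, τ.IsSwap) ∧ π = σ * L.prod}) ⟨L.length, L, rfl, hswap, hπ⟩

theorem reachIn_two_mul_cayleyDist (σ π : Equiv.Perm (Fin n)) :
    ReachIn IsMove (2 * cayleyDist σ π) (oneLine σ) (oneLine π) := by
  obtain ⟨L, hlen, hswap, hπ⟩ := exists_swaps_length_eq_cayleyDist σ π
  rw [← hlen, hπ]
  exact reachIn_oneLine_mul_prod_swaps σ hswap

theorem translocDist_le_two_mul_cayleyDist (σ π : Equiv.Perm (Fin n)) :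
    translocDist σ π ≤ 2 * cayleyDist σ π :=
  Nat.sInf_le (reachIn_two_mul_cayleyDist σ π)

theorem reachIn_translocDist (σ π : Equiv.Perm (Fin n)) :
    ReachIn IsMove (translocDist σ π) (oneLine σ) (oneLine π) :=
  Nat.sInf_mem (s := {m | ReachIn IsMove m (oneLine σ) (oneLine π)})
    ⟨_, reachIn_two_mul_cayleyDist σ π⟩

theorem eq_of_translocDist_eq_zero {σ π : Equiv.Perm (Fin n)} (h : translocDist σ π = 0) :
    σ = π := by
  have hreach := reachIn_translocDist σ π
  rw [h] at hreach
  exact oneLine_injective hreach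

theorem cayleyDist_le_translocDist_mul_sub_one (σ π : Equiv.Perm (Fin n)) :
    cayleyDist σ π ≤ translocDist σ π * (n - 1) := by
  rcases Nat.eq_zero_or_pos (translocDist σ π) with hzero | hpos
  · rw [eq_of_translocDist_eq_zero hzero, cayleyDist_self]
    exact Nat.zero_le _
  · exact (cayleyDist_le_sub_one σ π).trans (Nat.le_mul_of_pos_left _ hpos)

end Distances

/-- For every `n ≥ 2` and all `σ, π ∈ S_n`,
`dT(σ,π)/(n−1) ≤ d∘(σ,π) ≤ 2·dT(σ,π)`, where `dT` is the Cayley distance. -/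
theorem cayley_bounds_translocDist (n : ℕ) (hn : 2 ≤ n) (σ π : Equiv.Perm (Fin n)) :
    (cayleyDist σ π : ℝ) / ((n : ℝ) - 1) ≤ (translocDist σ π : ℝ) ∧
    translocDist σ π ≤ 2 * cayleyDist σ π := by
  refine ⟨?_, translocDist_le_two_mul_cayleyDist σ π⟩
  have one_lt : (1 : ℝ) < n := by exact_mod_cast hn
  rw [div_le_iff₀ (sub_pos.mpr one_lt), ← Nat.cast_pred (by omega)]
  exact_mod_cast cayleyDist_le_translocDist_mul_sub_one σ π
end

section
/- For every n ≥ 1 and all permutations π, σ ∈ S_n, the minimum number R(π,σ) of right translocations needed to transform π into σ equals the cardinality of the set J(π,σ) = { i ∈ [n] : there exists j ∈ [n] with π⁻¹(i) < π⁻¹(j) and σ⁻¹(i) > σ⁻¹(j) }. -/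
/-- `IsRightMove l l'` holds if `l'` is obtained from `l` by a single right
translocation: removing the element at position `i` and reinserting it at a
position `j ≥ i`. -/
def IsRightMove {α : Type*} (l l' : List α) : Prop :=
  ∃ i j : Fin l.length, (i : ℕ) ≤ (j : ℕ) ∧ l' = (l.eraseIdx i).insertIdx j (l.get i)

/-- `rightTranslocCount π σ` is the minimum number of right translocations
transforming `π` into `σ`. -/
noncomputable def rightTranslocCount {n : ℕ} (π σ : Equiv.Perm (Fin n)) : ℕ :=
  sInf {m | ReachIn IsRightMove m (oneLine π) (oneLine σ)}

/-! If an entry `x` is followed by an entry that precedes `x` in the target, then a right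
translocation of any other entry leaves this so, since moving the witness to the right keeps it to
the right of `x`. Hence each move cures at most one such `x`, which gives the lower bound.
Insertion sort, started from the right end, attains it: an entry moves only if some entry to its
right precedes it in the target, and then a single right translocation puts it in place. -/

namespace ReachIn

variable {α β : Type*} {s : List α → List α → Prop} {m : ℕ} {l l' l'' : List α}

theorem tail (h : ReachIn s m l l') (hs : s l' l'') : ReachIn s (m + 1) l l'' := by
  induction m generalizing l with
  | zero => exact ⟨l'', h ▸ hs, rfl⟩
  | succ m ih =>
    obtain ⟨k, hk, hr⟩ := h
    exact ⟨k, hk, ih hr⟩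

theorem map {s' : List β → List β → Prop} (f : List α → List β)
    (hf : ∀ l l', s l l' → s' (f l) (f l')) (h : ReachIn s m l l') :
    ReachIn s' m (f l) (f l') := by
  induction m generalizing l with
  | zero => exact congrArg f h
  | succ m ih =>
    obtain ⟨k, hk, hr⟩ := h
    exact ⟨f k, hf _ _ hk, ih hr⟩

theorem le_add {f : List α → ℕ} (hf : ∀ l l', s l l' → f l ≤ f l' + 1)
    (h : ReachIn s m l l') : f l ≤ f l' + m := by
  induction m generalizing l with
  | zero => exact (congrArg f h).le
  | succ m ih =>
    obtain ⟨k, hk, hr⟩ := h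
    calc f l
      _ ≤ f k + 1 := hf _ _ hk
      _ ≤ f l' + m + 1 := Nat.add_le_add_right (ih hr) 1

end ReachIn

theorem insertIdx_length_append_s7 {α : Type*} (x : α) (a c : List α) :
    (a ++ c).insertIdx a.length x = a ++ x :: c := by
  induction a with
  | nil => rfl
  | cons y a ih => simp [ih]

theorem isRightMove_iff {α : Type*} {l l' : List α} :
    IsRightMove l l' ↔ ∃ a x b c, l = a ++ x :: (b ++ c) ∧ l' = a ++ (b ++ x :: c) := by
  constructor
  · rintro ⟨⟨i, hi⟩, ⟨j, hj⟩, hij : i ≤ j, rfl⟩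
    refine ⟨l.take i, l[i], (l.drop (i + 1)).take (j - i), (l.drop (i + 1)).drop (j - i), ?_, ?_⟩
    · simp
    · have hlen : (l.take i ++ (l.drop (i + 1)).take (j - i)).length = j := by simp; lia
      have hinsert := insertIdx_length_append_s7 l[i] (l.take i ++ (l.drop (i + 1)).take (j - i))
        ((l.drop (i + 1)).drop (j - i))
      rwa [hlen, List.append_assoc, List.append_assoc, List.take_append_drop,
        ← List.eraseIdx_eq_take_drop_succ] at hinsert
  · rintro ⟨a, x, b, c, rfl, rfl⟩
    refine ⟨⟨a.length, by simp⟩, ⟨(a ++ b).length, by simp⟩, by simp, ?_⟩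
    simpa [List.eraseIdx_append_of_length_le] using (insertIdx_length_append_s7 x (a ++ b) c).symm

theorem IsRightMove.cons {α : Type*} (y : α) {l l' : List α} (h : IsRightMove l l') :
    IsRightMove (y :: l) (y :: l') := by
  obtain ⟨a, x, b, c, rfl, rfl⟩ := isRightMove_iff.1 h
  exact isRightMove_iff.2 ⟨y :: a, x, b, c, rfl, rfl⟩

section InversionTop

variable {α : Type*} (r : α → α → Prop) [DecidableRel r]

theorem isRightMove_cons_orderedInsert (x : α) (l : List α) :
    IsRightMove (x :: l) (l.orderedInsert r x) := by
  rw [List.orderedInsert_eq_take_drop]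
  refine isRightMove_iff.2 ⟨[], x, _, _, ?_, rfl⟩
  rw [List.takeWhile_append_dropWhile, List.nil_append]

/-- The number of inversion tops of a list: the positions holding an entry `x` that is followed,
somewhere to its right, by an entry `y` with `¬ r x y`. -/
def inversionTopCount : List α → ℕ
  | [] => 0
  | x :: l => inversionTopCount l + if ∀ y ∈ l, r x y then 0 else 1

theorem inversionTopCount_eq_zero {l : List α} (h : l.Pairwise r) :
    inversionTopCount r l = 0 := by
  induction h with
  | nil => rfl
  | cons hx _ ih => rw [inversionTopCount, ih, if_pos hx]

theorem inversionTopCount_le_of_sublist {l l' : List α} (h : l.Sublist l') :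
    inversionTopCount r l ≤ inversionTopCount r l' := by
  induction h with grind [inversionTopCount, List.Sublist.subset]

theorem IsRightMove.inversionTopCount_le {l l' : List α} (h : IsRightMove l l') :
    inversionTopCount r l ≤ inversionTopCount r l' + 1 := by
  rw [isRightMove_iff] at h
  obtain ⟨a, x, b, c, rfl, rfl⟩ := h
  induction a with
  | nil =>
    have hcons : inversionTopCount r (x :: (b ++ c)) ≤ inversionTopCount r (b ++ c) + 1 := by
      grind [inversionTopCount]
    have herase : inversionTopCount r (b ++ c) ≤ inversionTopCount r (b ++ x :: c) :=
      inversionTopCount_le_of_sublist r (by simp)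
    exact hcons.trans (Nat.add_le_add_right herase 1)
  | cons y a ih =>
    have hmem (z : α) : z ∈ a ++ x :: (b ++ c) ↔ z ∈ a ++ (b ++ x :: c) := by grind
    simp only [List.cons_append, inversionTopCount, hmem]
    lia

theorem reachIn_insertionSort (l : List α) :
    ReachIn IsRightMove (inversionTopCount r l) l (l.insertionSort r) := by
  induction l with
  | nil => rfl
  | cons x l ih =>
    have hcons := ih.map (x :: ·) fun _ _ => IsRightMove.cons x
    rw [inversionTopCount]
    split_ifs with hx
    · rwa [List.insertionSort_cons_of_forall_rel r hx]
    · exact hcons.tail (isRightMove_cons_orderedInsert r x _)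

theorem isLeast_inversionTopCount [Std.Antisymm r] [Std.Total r] [IsTrans α r] {l t : List α}
    (hperm : l.Perm t) (ht : t.Pairwise r) :
    IsLeast {m | ReachIn IsRightMove m l t} (inversionTopCount r l) := by
  have hsort : l.insertionSort r = t :=
    ((l.perm_insertionSort r).trans hperm).eq_of_pairwise' (l.pairwise_insertionSort r) ht
  refine ⟨hsort ▸ reachIn_insertionSort r l, fun m hm => ?_⟩
  simpa [inversionTopCount_eq_zero r ht] using
    ReachIn.le_add (f := inversionTopCount r) (fun _ _ => IsRightMove.inversionTopCount_le r) hm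

theorem inversionTopCount_ofFn {n : ℕ} (f : Fin n → α) :
    inversionTopCount r (List.ofFn f) = {i | ∃ j, i < j ∧ ¬ r (f i) (f j)}.ncard := by
  classical
  rw [Set.ncard_eq_toFinset_card', Set.toFinset_ofPred]
  induction n with
  | zero => simp [inversionTopCount]
  | succ n ih =>
    rw [List.ofFn_succ, inversionTopCount, ih, Fin.card_filter_univ_succ]
    simp only [List.mem_ofFn, forall_exists_index, forall_apply_eq_imp_iff, Fin.exists_fin_succ,
      lt_self_iff_false, false_and, Fin.succ_pos, true_and, false_or, not_lt_zero,
      Fin.succ_lt_succ_iff]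
    split_ifs <;> grind

end InversionTop

theorem oneLine_perm_finRange {n : ℕ} (π : Equiv.Perm (Fin n)) :
    (oneLine π).Perm (List.finRange n) := by
  rw [← List.ofFn_id]
  exact π.ofFn_comp_perm id

theorem inversionTopCount_oneLine {n : ℕ} (r : Fin n → Fin n → Prop) [DecidableRel r]
    (π : Equiv.Perm (Fin n)) :
    inversionTopCount r (oneLine π) = {a | ∃ b, π⁻¹ a < π⁻¹ b ∧ ¬ r a b}.ncard := by
  rw [oneLine, inversionTopCount_ofFn, ← Set.ncard_image_of_injective _ π.injective]
  congr 1
  ext a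
  obtain ⟨i, rfl⟩ := π.surjective a
  rw [π.injective.mem_set_image, Set.mem_ofPred_eq, Set.mem_ofPred_eq,
    π.surjective.exists (p := fun b => π⁻¹ (π i) < π⁻¹ b ∧ ¬ r (π i) b)]
  simp

/-- The reflexive order in which the one-line notation of `σ` lists the elements of `Fin n`:
`σ⁻¹ a` is the position of `a`. -/
def PrecedesIn {n : ℕ} (σ : Equiv.Perm (Fin n)) (a b : Fin n) : Prop :=
  σ⁻¹ a ≤ σ⁻¹ b

namespace PrecedesIn

variable {n : ℕ} (σ : Equiv.Perm (Fin n))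

instance : DecidableRel (PrecedesIn σ) :=
  fun a b => inferInstanceAs (Decidable (σ⁻¹ a ≤ σ⁻¹ b))

instance : Std.Antisymm (PrecedesIn σ) :=
  ⟨fun _ _ hab hba => σ⁻¹.injective (le_antisymm hab hba)⟩

instance : Std.Total (PrecedesIn σ) :=
  ⟨fun _ _ => le_total _ _⟩

instance : IsTrans (Fin n) (PrecedesIn σ) :=
  ⟨fun _ _ _ => le_trans⟩

theorem pairwise_oneLine : (oneLine σ).Pairwise (PrecedesIn σ) :=
  List.pairwise_ofFn.2 fun i j hij => by simpa [PrecedesIn] using hij.le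

end PrecedesIn

/-- For every `n ≥ 1` and all `π, σ ∈ S_n`, the minimum number `R(π,σ)` of right
translocations needed to transform `π` into `σ` equals the cardinality of the set
`J(π,σ) = { i : ∃ j, π⁻¹(i) < π⁻¹(j) and σ⁻¹(i) > σ⁻¹(j) }`. -/
theorem rightTranslocCount_eq_card_J (n : ℕ) (hn : 1 ≤ n) (π σ : Equiv.Perm (Fin n)) :
    rightTranslocCount π σ =
      {i : Fin n | ∃ j : Fin n, π⁻¹ i < π⁻¹ j ∧ σ⁻¹ j < σ⁻¹ i}.ncard := by
  have hperm : (oneLine π).Perm (oneLine σ) :=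
    (oneLine_perm_finRange π).trans (oneLine_perm_finRange σ).symm
  calc rightTranslocCount π σ
    _ = inversionTopCount (PrecedesIn σ) (oneLine π) :=
      (isLeast_inversionTopCount _ hperm (PrecedesIn.pairwise_oneLine σ)).csInf_eq
    _ = {a | ∃ b, π⁻¹ a < π⁻¹ b ∧ ¬ PrecedesIn σ a b}.ncard := inversionTopCount_oneLine _ π
    _ = {i : Fin n | ∃ j : Fin n, π⁻¹ i < π⁻¹ j ∧ σ⁻¹ j < σ⁻¹ i}.ncard := by
      simp only [PrecedesIn, not_le]
end

section
/- For all integers n and d with n ≥ d ≥ 2, the maximum size A_H(n,d) of a subset of S_n whose distinct elements are at pairwise Hamming distance at least d satisfies (n−d+1)!/(d−1) ≤ A_H(n,d) ≤ n!/(d−1)!. -/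
/-- The Hamming distance between two permutations: the number of positions at which
their one-line notations differ. -/
def permHammingDist {n : ℕ} (σ π : Equiv.Perm (Fin n)) : ℕ :=
  (Finset.univ.filter fun i => σ i ≠ π i).card

/-- `maxHammingCode n d` is the maximum size of a subset of the symmetric group on `n`
elements whose distinct elements are at pairwise Hamming distance at least `d`. -/
noncomputable def maxHammingCode (n d : ℕ) : ℕ :=
  sSup {M | ∃ C : Finset (Equiv.Perm (Fin n)), C.card = M ∧
    ∀ σ ∈ C, ∀ π ∈ C, σ ≠ π → d ≤ permHammingDist σ π}

/-!
Put `d = k + 1`. The upper bound is a Singleton bound: two codewords that agree on `n - k` fixed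
positions coincide, so a code embeds into the injections from those positions into `[n]`, of which
there are `n! / k!`. The lower bound is a Gilbert–Varshamov bound: the balls of radius `k` around
the codewords of a maximal code cover `S_n`, and each of them has at most
`n.choose k * k! = n! / (n - k)!` elements, so the code has at least `(n - k)!` codewords.
-/

open Equiv Finset
open scoped Nat

theorem exists_mem_not_rel_of_maximal_pairwise {β : Type*} {r : β → β → Prop}
    [Std.Symm r] [Std.Irrefl r] {C : Finset β}
    (hC : Maximal (fun C : Finset β ↦ (C : Set β).Pairwise r) C) (x : β) :
    ∃ y ∈ C, ¬r x y := by
  classical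
  by_contra! h
  have hins : ((insert x C : Finset β) : Set β).Pairwise r := by
    rw [coe_insert]
    exact hC.prop.insert_of_symm fun y hy _ ↦ h y hy
  have hx : x ∈ C := hC.le_of_ge hins (subset_insert x C) (mem_insert_self x C)
  exact irrefl x (h x hx)

theorem hammingDist_le_iff_exists_card_eq {ι : Type*} {β : ι → Type*} [Fintype ι]
    [∀ i, DecidableEq (β i)] {x y : ∀ i, β i} {k : ℕ} (hk : k ≤ Fintype.card ι) :
    hammingDist x y ≤ k ↔ ∃ S : Finset ι, #S = k ∧ ∀ i ∉ S, x i = y i := by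
  constructor
  · intro h
    obtain ⟨S, hS, hcard⟩ := exists_superset_card_eq h hk
    exact ⟨S, hcard, fun i hi ↦ by_contra fun hne ↦ hi (hS (by simpa using hne))⟩
  · rintro ⟨S, rfl, hS⟩
    refine card_le_card fun i hi ↦ by_contra fun hiS ↦ ?_
    exact (mem_filter.mp hi).2 (hS i hiS)

section Perm

variable {α : Type*} [Fintype α] [DecidableEq α]

theorem card_perm_eq_off (π : Perm α) (S : Finset α) :
    #{σ : Perm α | ∀ i ∉ S, σ i = π i} = (#S)! := by
  have translate : {σ : Perm α // ∀ i ∉ S, σ i = π i} ≃ {τ : Perm α // ∀ i, ¬i ∈ S → τ i = i} :=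
    (Equiv.mulLeft π⁻¹).subtypeEquiv fun σ ↦ by simp [Equiv.symm_apply_eq]
  rw [← Fintype.card_subtype, Fintype.card_congr translate,
    ← Fintype.card_congr (Perm.subtypeEquivSubtypePerm (· ∈ S)), Fintype.card_perm,
    Fintype.card_coe]

theorem card_perm_hammingDist_le (π : Perm α) {k : ℕ} (hk : k ≤ Fintype.card α) :
    #{σ : Perm α | hammingDist ⇑σ ⇑π ≤ k} ≤ (Fintype.card α).descFactorial k := by
  have hcover : ({σ : Perm α | hammingDist ⇑σ ⇑π ≤ k} : Finset (Perm α)) ⊆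
      (powersetCard k univ).biUnion fun S ↦ {σ : Perm α | ∀ i ∉ S, σ i = π i} := fun σ hσ ↦ by
    simpa [hammingDist_le_iff_exists_card_eq hk] using hσ
  calc #{σ : Perm α | hammingDist ⇑σ ⇑π ≤ k}
    _ ≤ #(powersetCard k (univ : Finset α)) * k ! :=
      (card_le_card hcover).trans <| card_biUnion_le_card_mul _ _ _ fun S hS ↦ by
        rw [card_perm_eq_off, (mem_powersetCard.mp hS).2]
    _ = (Fintype.card α).descFactorial k := by
      rw [card_powersetCard, card_univ, mul_comm, Nat.descFactorial_eq_factorial_mul_choose]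

/-- `IsPermCode d C` says that `C` is a permutation code of minimum distance at least `d`. Words are
compared by the Hamming distance `hammingDist` of their underlying functions, which on `Fin n` is
`permHammingDist`. -/
def IsPermCode (d : ℕ) (C : Finset (Perm α)) : Prop :=
  (C : Set (Perm α)).Pairwise fun σ π ↦ d ≤ hammingDist ⇑σ ⇑π

namespace IsPermCode

variable {C : Finset (Perm α)} {k : ℕ}

theorem card_le_descFactorial (hC : IsPermCode (k + 1) C) (hk : k ≤ Fintype.card α) :
    #C ≤ (Fintype.card α).descFactorial (Fintype.card α - k) := by
  obtain ⟨S, -, hS⟩ := exists_subset_card_eq (s := (univ : Finset α)) hk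
  let restrict (σ : Perm α) : {i // i ∉ S} ↪ α :=
    (Function.Embedding.subtype (· ∉ S)).trans σ.toEmbedding
  have hinj : Set.InjOn restrict C := fun σ hσ π hπ h ↦ by
    have hagree : ∀ i ∉ S, σ i = π i := fun i hi ↦ DFunLike.congr_fun h ⟨i, hi⟩
    have hdist : hammingDist ⇑σ ⇑π ≤ k := (hammingDist_le_iff_exists_card_eq hk).2 ⟨S, hS, hagree⟩
    exact hC.eq hσ hπ (by omega)
  calc #C ≤ Fintype.card ({i // i ∉ S} ↪ α) := card_le_card_of_injOn restrict (by simp) hinj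
    _ = (Fintype.card α).descFactorial (Fintype.card α - k) := by
      simp [Fintype.card_embedding_eq, Fintype.card_subtype_compl, hS]

theorem factorial_le_card_of_maximal (hC : Maximal (IsPermCode (k + 1)) C)
    (hk : k ≤ Fintype.card α) : (Fintype.card α - k)! ≤ #C := by
  let far (σ π : Perm α) : Prop := k + 1 ≤ hammingDist ⇑σ ⇑π
  have : Std.Symm far := ⟨fun σ π h ↦ h.trans_eq (hammingDist_comm _ _)⟩
  have : Std.Irrefl far := ⟨fun σ ↦ by simp [far]⟩
  have hcover : (univ : Finset (Perm α)) ⊆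
      C.biUnion fun π ↦ {σ : Perm α | hammingDist ⇑σ ⇑π ≤ k} := fun σ _ ↦ by
    obtain ⟨π, hπ, hσπ⟩ := exists_mem_not_rel_of_maximal_pairwise (r := far) hC σ
    simpa using ⟨π, hπ, Nat.lt_succ_iff.1 (not_le.1 hσπ)⟩
  have hmul : (Fintype.card α - k)! * (Fintype.card α).descFactorial k ≤
      #C * (Fintype.card α).descFactorial k :=
    calc (Fintype.card α - k)! * (Fintype.card α).descFactorial k
      _ = #(univ : Finset (Perm α)) := by
        rw [Nat.factorial_mul_descFactorial hk, card_univ, Fintype.card_perm]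
      _ ≤ #C * (Fintype.card α).descFactorial k :=
        (card_le_card hcover).trans <|
          card_biUnion_le_card_mul _ _ _ fun π _ ↦ card_perm_hammingDist_le π hk
  exact Nat.le_of_mul_le_mul_right hmul (Nat.descFactorial_pos.2 hk)

end IsPermCode

end Perm

theorem maxHammingCode_le_iff {n d m : ℕ} :
    maxHammingCode n d ≤ m ↔ ∀ C : Finset (Perm (Fin n)), IsPermCode d C → #C ≤ m := by
  have hbdd : BddAbove {M | ∃ C : Finset (Perm (Fin n)), #C = M ∧
      ∀ σ ∈ C, ∀ π ∈ C, σ ≠ π → d ≤ permHammingDist σ π} :=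
    ⟨Fintype.card (Perm (Fin n)), by rintro _ ⟨C, rfl, -⟩; exact card_le_univ C⟩
  rw [maxHammingCode, csSup_le_iff hbdd ⟨0, ∅, by simp⟩]
  constructor
  · exact fun h C hC ↦ h _ ⟨C, rfl, fun σ hσ π hπ hne ↦ hC hσ hπ hne⟩
  · rintro h _ ⟨C, rfl, hC⟩
    exact h C fun σ hσ π hπ hne ↦ hC σ hσ π hπ hne

theorem maxHammingCode_le_descFactorial {n k : ℕ} (hk : k ≤ n) :
    maxHammingCode n (k + 1) ≤ n.descFactorial (n - k) :=
  maxHammingCode_le_iff.2 fun C hC ↦ by simpa using hC.card_le_descFactorial (by simpa using hk)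

theorem factorial_le_maxHammingCode {n k : ℕ} (hk : k ≤ n) :
    (n - k)! ≤ maxHammingCode n (k + 1) := by
  have hempty : IsPermCode (k + 1) (∅ : Finset (Perm (Fin n))) := by simp [IsPermCode]
  obtain ⟨C, -, hC⟩ := Finite.exists_le_maximal hempty
  calc (n - k)! ≤ #C := by
        simpa using IsPermCode.factorial_le_card_of_maximal hC (by simpa using hk)
    _ ≤ maxHammingCode n (k + 1) := maxHammingCode_le_iff.1 le_rfl C hC.prop

theorem maxHammingCode_bounds_general (n d : ℕ) (hd : 1 ≤ d) (hdn : d ≤ n) :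
    ((n - d + 1).factorial : ℝ) ≤ (maxHammingCode n d : ℝ) ∧
    (maxHammingCode n d : ℝ) ≤ (n.factorial : ℝ) / ((d - 1).factorial : ℝ) := by
  obtain ⟨k, rfl⟩ := Nat.exists_eq_add_of_le' hd
  have hk : k ≤ n := by omega
  rw [Nat.add_sub_cancel, show n - (k + 1) + 1 = n - k by omega]
  refine ⟨mod_cast factorial_le_maxHammingCode hk, ?_⟩
  calc (maxHammingCode n (k + 1) : ℝ) ≤ n.descFactorial (n - k) :=
        mod_cast maxHammingCode_le_descFactorial hk
    _ = n ! / k ! := by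
      have hmul := Nat.factorial_mul_descFactorial (Nat.sub_le n k)
      rw [Nat.sub_sub_self hk] at hmul
      rw [eq_div_iff (by positivity), mul_comm]
      exact_mod_cast hmul

/-- For all `n ≥ d ≥ 2`, `(n−d+1)!/(d−1) ≤ A_H(n,d) ≤ n!/(d−1)!`. -/
theorem maxHammingCode_bounds (n d : ℕ) (hd : 2 ≤ d) (hdn : d ≤ n) :
    ((n - d + 1).factorial : ℝ) / ((d : ℝ) - 1) ≤ (maxHammingCode n d : ℝ) ∧
    (maxHammingCode n d : ℝ) ≤ (n.factorial : ℝ) / ((d - 1).factorial : ℝ) := by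
  have hd' : (2 : ℝ) ≤ d := mod_cast hd
  obtain ⟨hlower, hupper⟩ := maxHammingCode_bounds_general n d (by omega) hdn
  exact ⟨(div_le_self (by positivity) (by linarith)).trans hlower, hupper⟩
end

section
/- Let n ≥ 2 and let σ, π ∈ S_n be permutations with translocation distance d∘(σ,π) = 1. Then there are at most three indices i ∈ {1,…,n−1} for which there exists j ∈ {1,…,n−1} with σ(i) = π(j) and σ(i+1) ≠ π(j+1). -/
section AdjacentPairs

open Set

variable {α : Type*}

/-- The set of pairs of consecutive entries of `l`, in order. -/
def adjacentPairs (l : List α) : Set (α × α) := {p | [p.1, p.2] <:+: l}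

/-- The pair formed by the last entry of `xs` and the first entry of `ys`, which becomes
consecutive when the lists are joined; a set so as to be empty when one of the lists is. -/
def junctionPairs (xs ys : List α) : Set (α × α) := {p | [p.1] <:+ xs ∧ [p.2] <+: ys}

theorem encard_sdiff_triangle (s t u : Set α) :
    (s \ u).encard ≤ (s \ t).encard + (t \ u).encard :=
  (encard_le_encard (sdiff_triangle s t u)).trans (encard_union_le _ _)

theorem adjacentPairs_mono {l l' : List α} (h : l <:+: l') : adjacentPairs l ⊆ adjacentPairs l' :=
  fun _ hp ↦ List.IsInfix.trans hp h

theorem pair_infix_append_iff {a b : α} {xs ys : List α} :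
    [a, b] <:+: xs ++ ys ↔ [a, b] <:+: xs ∨ [a, b] <:+: ys ∨ [a] <:+ xs ∧ [b] <+: ys := by
  rw [List.infix_append_iff_ne_nil]
  refine or_congr_right (or_congr_right ⟨?_, fun ⟨ha, hb⟩ ↦ ⟨[a], [b], by simp [ha, hb]⟩⟩)
  rintro ⟨l₁, l₂, h₁, h₂, hab, hxs, hys⟩
  obtain ⟨x, t, rfl⟩ := List.exists_cons_of_ne_nil h₁
  obtain ⟨rfl, hb⟩ := List.cons_eq_cons.1 hab
  obtain ⟨rfl, rfl⟩ := (List.append_eq_singleton_iff.1 hb.symm).resolve_right (h₂ ·.2)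
  exact ⟨hxs, hys⟩

theorem adjacentPairs_append (xs ys : List α) :
    adjacentPairs (xs ++ ys) = adjacentPairs xs ∪ adjacentPairs ys ∪ junctionPairs xs ys := by
  ext ⟨a, b⟩
  simp [adjacentPairs, junctionPairs, pair_infix_append_iff, or_assoc]

theorem adjacentPairs_cons (x : α) (l : List α) :
    adjacentPairs (x :: l) = adjacentPairs l ∪ junctionPairs [x] l := by
  rw [← List.singleton_append, adjacentPairs_append]
  simp [adjacentPairs, List.infix_singleton_iff]

theorem encard_junctionPairs_le_one (xs ys : List α) : (junctionPairs xs ys).encard ≤ 1 := by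
  simp only [junctionPairs, List.singleton_suffix_iff_getLast?_eq_some,
    List.singleton_prefix_iff_head?_eq_some, encard_le_one_iff_subsingleton]
  exact fun p hp q hq ↦ Prod.ext (Option.some_injective _ (hp.1.symm.trans hq.1))
    (Option.some_injective _ (hp.2.symm.trans hq.2))

theorem encard_adjacentPairs_sdiff_eraseIdx_le_two (l : List α) (i : ℕ) :
    (adjacentPairs l \ adjacentPairs (l.eraseIdx i)).encard ≤ 2 := by
  obtain hi | hi := lt_or_ge i l.length
  · have hl : l = l.take i ++ l[i] :: l.drop (i + 1) := by simp
    have hsub : adjacentPairs l \ adjacentPairs (l.eraseIdx i) ⊆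
        junctionPairs [l[i]] (l.drop (i + 1)) ∪
          junctionPairs (l.take i) (l[i] :: l.drop (i + 1)) := by
      rw [sdiff_subset_iff, List.eraseIdx_eq_take_drop_succ, adjacentPairs_append]
      conv_lhs => rw [hl, adjacentPairs_append, adjacentPairs_cons]
      grind
    calc
      _ ≤ _ + _ := (encard_le_encard hsub).trans (encard_union_le _ _)
      _ ≤ 1 + 1 := add_le_add (encard_junctionPairs_le_one _ _) (encard_junctionPairs_le_one _ _)
      _ = 2 := one_add_one_eq_two
  · simp [List.eraseIdx_of_length_le hi]

theorem encard_adjacentPairs_eraseIdx_sdiff_le_one (l : List α) (i : ℕ) :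
    (adjacentPairs (l.eraseIdx i) \ adjacentPairs l).encard ≤ 1 := by
  refine (encard_le_encard ?_).trans
    (encard_junctionPairs_le_one (l.take i) (l.drop (i + 1)))
  rw [List.eraseIdx_eq_take_drop_succ, adjacentPairs_append, sdiff_subset_iff]
  exact union_subset_union_left _ (union_subset
    (adjacentPairs_mono (l.take_prefix i).isInfix)
    (adjacentPairs_mono (l.drop_suffix (i + 1)).isInfix))

theorem IsMove.encard_adjacentPairs_sdiff_le {l l' : List α} (h : IsMove l l') :
    (adjacentPairs l \ adjacentPairs l').encard ≤ 3 := by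
  obtain ⟨i, j, rfl⟩ := h
  have hinsert := encard_adjacentPairs_eraseIdx_sdiff_le_one
    ((l.eraseIdx i).insertIdx j (l.get i)) j
  rw [List.eraseIdx_insertIdx_self] at hinsert
  calc
    _ ≤ _ + _ := encard_sdiff_triangle _ (adjacentPairs (l.eraseIdx i)) _
    _ ≤ 2 + 1 := add_le_add (encard_adjacentPairs_sdiff_eraseIdx_le_two l i) hinsert
    _ = 3 := two_add_one_eq_three

theorem ReachIn.encard_adjacentPairs_sdiff_le {m : ℕ} {l l' : List α} (h : ReachIn IsMove m l l') :
    (adjacentPairs l \ adjacentPairs l').encard ≤ 3 * m := by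
  induction m generalizing l with
  | zero =>
    obtain rfl : l = l' := h
    simp
  | succ m ih =>
    obtain ⟨l'', hmove, hreach⟩ := h
    calc
      _ ≤ _ + _ := encard_sdiff_triangle _ (adjacentPairs l'') _
      _ ≤ 3 + 3 * m := add_le_add hmove.encard_adjacentPairs_sdiff_le (ih hreach)
      _ = 3 * (m + 1 : ℕ) := by push_cast; ring

theorem mem_adjacentPairs_iff_getElem {l : List α} {p : α × α} :
    p ∈ adjacentPairs l ↔ ∃ (i : ℕ) (hi : i + 1 < l.length), l[i] = p.1 ∧ l[i + 1] = p.2 := by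
  simp only [adjacentPairs, mem_ofPred_eq, List.infix_iff_getElem?]
  constructor
  · rintro ⟨k, -, hget⟩
    have hfst := hget 0 (by simp)
    have hsnd := hget 1 (by simp)
    grind
  · rintro ⟨i, hi, hfst, hsnd⟩
    exact ⟨i, by grind, by grind⟩

end AdjacentPairs

section Permutations

open Set

variable {n : ℕ}

theorem mem_adjacentPairs_oneLine {σ : Equiv.Perm (Fin n)} {p : Fin n × Fin n} :
    p ∈ adjacentPairs (oneLine σ) ↔
      ∃ (i : Fin n) (hi : (i : ℕ) + 1 < n), σ i = p.1 ∧ σ ⟨(i : ℕ) + 1, hi⟩ = p.2 := by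
  simp only [mem_adjacentPairs_iff_getElem, oneLine, Fin.exists_iff, List.length_ofFn,
    List.getElem_ofFn]
  exact exists_congr fun i ↦ ⟨fun ⟨hi, h⟩ ↦ ⟨i.lt_succ_self.trans hi, hi, h⟩, fun ⟨_, h⟩ ↦ h⟩

theorem reachIn_of_translocDist_eq {σ π : Equiv.Perm (Fin n)} {m : ℕ} (h : translocDist σ π = m)
    (hm : m ≠ 0) : ReachIn IsMove m (oneLine σ) (oneLine π) := by
  subst h
  exact Nat.sInf_mem (Nat.nonempty_of_pos_sInf (Nat.pos_of_ne_zero hm))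

theorem breakpoints_of_single_transloc_general {σ π : Equiv.Perm (Fin n)} {m : ℕ}
    (h : ReachIn IsMove m (oneLine σ) (oneLine π)) :
    {i : Fin n | ∃ (hi : (i : ℕ) + 1 < n) (j : Fin n) (hj : (j : ℕ) + 1 < n),
      σ i = π j ∧ σ ⟨(i : ℕ) + 1, hi⟩ ≠ π ⟨(j : ℕ) + 1, hj⟩}.ncard ≤ 3 * m := by
  set breakpoints := {i : Fin n | _}
  have hsub : breakpoints ⊆
      (fun p ↦ σ.symm p.1) '' (adjacentPairs (oneLine σ) \ adjacentPairs (oneLine π)) := by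
    rintro i ⟨hi, j, hj, hij, hne⟩
    refine ⟨(σ i, σ ⟨i + 1, hi⟩), ⟨mem_adjacentPairs_oneLine.2 ⟨i, hi, rfl, rfl⟩, fun hπ ↦ ?_⟩,
      σ.symm_apply_apply i⟩
    obtain ⟨k, hk, hki, hki'⟩ := mem_adjacentPairs_oneLine.1 hπ
    obtain rfl : k = j := π.injective (hki.trans hij)
    exact hne hki'.symm
  have hcard : breakpoints.encard ≤ 3 * m :=
    calc
      breakpoints.encard ≤ (adjacentPairs (oneLine σ) \ adjacentPairs (oneLine π)).encard :=
        (encard_le_encard hsub).trans (encard_image_le _ _)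
      _ ≤ 3 * m := h.encard_adjacentPairs_sdiff_le
  rw [← breakpoints.toFinite.cast_ncard_eq] at hcard
  exact_mod_cast hcard

end Permutations

/-- If `σ, π ∈ S_n` are at translocation distance `1`, then there are at most three
indices `i` (with `i+1` still an index) for which some index `j` satisfies
`σ(i) = π(j)` and `σ(i+1) ≠ π(j+1)`. -/
theorem breakpoints_of_single_transloc (n : ℕ) (hn : 2 ≤ n) (σ π : Equiv.Perm (Fin n))
    (h : translocDist σ π = 1) :
    {i : Fin n | ∃ (hi : (i : ℕ) + 1 < n) (j : Fin n) (hj : (j : ℕ) + 1 < n),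
      σ i = π j ∧ σ ⟨(i : ℕ) + 1, hi⟩ ≠ π ⟨(j : ℕ) + 1, hj⟩}.ncard ≤ 3 := by
  exact breakpoints_of_single_transloc_general (reachIn_of_translocDist_eq h one_ne_zero)
end
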